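/- arXiv:1803.11092 — 6 statements merged into one kernel-verified Lean document; each statement's English description precedes it below -/
import Mathlib

section
/- Let m be a positive integer. Let g : ℍ × ℂ → ℂ be a Jacobi form of weight 0 and index m, i.e. a holomorphic function satisfying (i) g((aτ+b)/(cτ+d), z/(cτ+d)) = e(mcz²/(cτ+d))·g(τ,z) for all [[a,b],[c,d]] ∈ SL₂(ℤ), (ii) g(τ, z+λτ+μ) = e(−mλ²τ − 2mλz)·g(τ,z) for all λ, μ ∈ ℤ, and (iii) g has a Fourier expansion g(τ,z) = Σ c(n,r) qⁿζʳ over (n,r) ∈ ℤ², converging absolutely and locally uniformly on ℍ × ℂ, with c(n,r) = 0 whenever 4nm − r² < 0. Then g is identically zero. -/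
open Complex

section Bessel
open MeasureTheory UnitAddTorus

noncomputable local instance jfMS : MeasureSpace UnitAddCircle := ⟨AddCircle.haarAddCircle⟩

local instance jfHaar : Measure.IsAddHaarMeasure (volume : Measure UnitAddCircle) :=
  inferInstanceAs (Measure.IsAddHaarMeasure AddCircle.haarAddCircle)

local instance jfProb : IsProbabilityMeasure (volume : Measure UnitAddCircle) :=
  inferInstanceAs (IsProbabilityMeasure AddCircle.haarAddCircle)

lemma jf_bessel (a : ℤ × ℤ → ℂ) (ha : Summable fun p => ‖a p‖) (f : ℝ → ℝ → ℂ)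
    (hf : ∀ u x : ℝ, HasSum (fun p : ℤ × ℤ => a p *
      Complex.exp (2 * Real.pi * Complex.I * ((p.1 : ℂ) * u + (p.2 : ℂ) * x))) (f u x))
    (C : ℝ) (hC0 : 0 ≤ C) (hC : ∀ u x, ‖f u x‖ ≤ C) (S : Finset (ℤ × ℤ)) :
    ∑ p ∈ S, ‖a p‖ ^ 2 ≤ C ^ 2 := by
  let ι : ℤ × ℤ → (Fin 2 → ℤ) := fun p => ![p.1, p.2]
  have hι : Function.Injective ι := by
    intro p q h
    have h0 := congrFun h 0
    have h1 := congrFun h 1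
    simp [ι] at h0 h1
    exact Prod.ext h0 h1
  have hon : Orthonormal ℂ (fun p => mFourierLp (d := Fin 2) 2 (ι p)) :=
    orthonormal_mFourier.comp ι hι
  have hs : Summable (fun p => a p • mFourier (ι p)) := by
    refine Summable.of_norm ?_
    simpa [norm_smul, mFourier_norm] using ha
  obtain ⟨F, hF⟩ := hs
  have hFC : ‖F‖ ≤ C := by
    refine (ContinuousMap.norm_le _ hC0).mpr fun t => ?_
    obtain ⟨u, hu⟩ := QuotientAddGroup.mk_surjective (t 0)
    obtain ⟨x, hx⟩ := QuotientAddGroup.mk_surjective (t 1)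
    have h1 : HasSum (fun p => (a p • mFourier (ι p)) t) (F t) :=
      hF.map (ContinuousMap.evalCLM ℂ t) (ContinuousMap.evalCLM ℂ t).continuous
    have h2 : F t = f u x := by
      refine h1.unique ?_
      convert hf u x using 2 with p
      rw [ContinuousMap.smul_apply, smul_eq_mul]
      congr 1
      simp only [mFourier, ContinuousMap.coe_mk, Fin.prod_univ_two, ι]
      rw [← hu, ← hx]
      erw [fourier_coe_apply, fourier_coe_apply]
      rw [← Complex.exp_add]
      congr 1
      simp
      ring
    rw [h2]; exact hC u x
  let L := ContinuousMap.toLp (E := ℂ) 2 (volume : Measure (UnitAddTorus (Fin 2))) ℂ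
  have hLF : HasSum (fun p => a p • mFourierLp (d := Fin 2) 2 (ι p)) (L F) := by
    have := hF.map L L.continuous
    convert this using 2 with p
    simp [L]
  have hn : ‖L F‖ ≤ C := by
    have h1 := L.le_opNorm F
    have h2 : ‖L‖ ≤ 1 := by
      have := ContinuousMap.toLp_norm_le (E := ℂ) (p := 2) (μ := (volume : Measure (UnitAddTorus (Fin 2)))) (𝕜 := ℂ)
      have h3 : measureUnivNNReal (volume : Measure (UnitAddTorus (Fin 2))) = 1 := by
        simp [measureUnivNNReal]
      rw [h3] at this
      simpa using this
    nlinarith [norm_nonneg F, norm_nonneg L]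
  have hco : ∀ p, inner ℂ (mFourierLp (d := Fin 2) 2 (ι p)) (L F) = a p := by
    intro p
    have h1 := hLF.map (innerSL ℂ (mFourierLp (d := Fin 2) 2 (ι p))) (innerSL ℂ _).continuous
    refine h1.unique ?_
    convert hasSum_single p ?_ using 1
    · simp only [Function.comp_apply, innerSL_apply_apply, inner_smul_right]
      rw [orthonormal_iff_ite.mp hon p p]; simp
    · intro q hq
      simp only [Function.comp_apply, innerSL_apply_apply, inner_smul_right]
      rw [orthonormal_iff_ite.mp hon p q, if_neg (Ne.symm hq)]; simp
  have hb := hon.sum_inner_products_le (L F) (s := S)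
  simp only [hco] at hb
  exact hb.trans (pow_le_pow_left₀ (norm_nonneg _) hn 2)

end Bessel

lemma jf_norm_exp (w : ℂ) : ‖Complex.exp (2 * Real.pi * Complex.I * w)‖ = Real.exp (-(2 * Real.pi * w.im)) := by
  rw [Complex.norm_exp]
  congr 1
  simp 

lemma jf_sl (τ : ℂ) (hτ : 0 < τ.im) : ∃ γ : Matrix.SpecialLinearGroup (Fin 2) ℤ,
    1 / 2 ≤ ((((γ : Matrix (Fin 2) (Fin 2) ℤ) 0 0 : ℂ) * τ +
        ((γ : Matrix (Fin 2) (Fin 2) ℤ) 0 1 : ℂ)) /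
      (((γ : Matrix (Fin 2) (Fin 2) ℤ) 1 0 : ℂ) * τ +
        ((γ : Matrix (Fin 2) (Fin 2) ℤ) 1 1 : ℂ))).im ∧
    ((((γ : Matrix (Fin 2) (Fin 2) ℤ) 0 0 : ℂ) * τ + ((γ : Matrix (Fin 2) (Fin 2) ℤ) 0 1 : ℂ)) /
      (((γ : Matrix (Fin 2) (Fin 2) ℤ) 1 0 : ℂ) * τ +
        ((γ : Matrix (Fin 2) (Fin 2) ℤ) 1 1 : ℂ))).im =
      τ.im / Complex.normSq (((γ : Matrix (Fin 2) (Fin 2) ℤ) 1 0 : ℂ) * τ +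
        ((γ : Matrix (Fin 2) (Fin 2) ℤ) 1 1 : ℂ)) ∧
    0 < Complex.normSq (((γ : Matrix (Fin 2) (Fin 2) ℤ) 1 0 : ℂ) * τ +
        ((γ : Matrix (Fin 2) (Fin 2) ℤ) 1 1 : ℂ)) := by
  obtain ⟨γ, h⟩ := ModularGroup.exists_one_half_le_im_smul ⟨τ, hτ⟩
  have h1 := UpperHalfPlane.coe_specialLinearGroup_apply γ ⟨τ, hτ⟩
  have h2 := ModularGroup.im_smul_eq_div_normSq γ ⟨τ, hτ⟩
  have h3 := UpperHalfPlane.normSq_denom_pos (Matrix.SpecialLinearGroup.mapGL ℝ γ) (z := τ) hτ.ne'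
  rw [← UpperHalfPlane.coe_im, h1] at h h2
  refine ⟨γ, ?_⟩
  simp [UpperHalfPlane.denom] at h h2 h3 ⊢
  exact ⟨h, h2, h3⟩

lemma jf_term (m n r : ℤ) (hm : 0 < m) (h : 0 ≤ 4 * n * m - r ^ 2) (v y : ℝ) (hv : 1 / 2 ≤ v)
    (hy0 : 0 ≤ y) (hy : y ≤ v) :
    Real.exp (-(2 * Real.pi * (n * v + r * y))) * Real.exp (-(2 * Real.pi * m * y ^ 2 / v)) ≤
      Real.exp (-(2 * Real.pi * (n * (1 / 2)))) +
      Real.exp (-(2 * Real.pi * (n * (1 / 2) + r * (1 / 2)))) := by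
  have hv0 : 0 < v := by linarith
  obtain ⟨a, rfl⟩ : ∃ a, y = a * v := ⟨y / v, by field_simp⟩
  have ha0 : 0 ≤ a := by
    by_contra hh; push Not at hh; nlinarith
  have ha1 : a ≤ 1 := by
    by_contra hh; push Not at hh; nlinarith
  have hm' : (0 : ℝ) < m := by exact_mod_cast hm
  have h' : (0 : ℝ) ≤ 4 * n * m - r ^ 2 := by exact_mod_cast h
  have hQ : 0 ≤ (n : ℝ) + r * a + m * a ^ 2 := by
    have : 0 ≤ 4 * (m : ℝ) * (n + r * a + m * a ^ 2) := by
      nlinarith [sq_nonneg (2 * m * a + r : ℝ)]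
    by_contra hh; push Not at hh; nlinarith
  have hma : 0 ≤ (m : ℝ) * a ^ 2 := by positivity
  rw [← Real.exp_add]
  have e1 : -(2 * Real.pi * (n * v + r * (a * v))) + -(2 * Real.pi * m * (a * v) ^ 2 / v)
      = -(2 * Real.pi * (v * (n + r * a + m * a ^ 2))) := by
    field_simp; ring
  rw [e1]
  have hk : (1 / 2 : ℝ) * (n + r * a) ≤ v * (n + r * a + m * a ^ 2) := by nlinarith
  have hpi := Real.pi_pos
  rcases le_total 0 (r : ℝ) with hr | hr
  · have : Real.exp (-(2 * Real.pi * (v * (n + r * a + m * a ^ 2)))) ≤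
        Real.exp (-(2 * Real.pi * (n * (1 / 2)))) := by
      apply Real.exp_le_exp.mpr
      have : (n * (1 / 2) : ℝ) ≤ v * (n + r * a + m * a ^ 2) := by nlinarith [mul_nonneg hr ha0]
      nlinarith
    linarith [Real.exp_pos (-(2 * Real.pi * (n * (1 / 2) + r * (1 / 2))))]
  · have : Real.exp (-(2 * Real.pi * (v * (n + r * a + m * a ^ 2)))) ≤
        Real.exp (-(2 * Real.pi * (n * (1 / 2) + r * (1 / 2)))) := by
      apply Real.exp_le_exp.mpr
      have : (n * (1 / 2) + r * (1 / 2): ℝ) ≤ v * (n + r * a + m * a ^ 2) := by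
        nlinarith [mul_nonneg (neg_nonneg.mpr hr) (sub_nonneg.mpr ha1)]
      nlinarith
    linarith [Real.exp_pos (-(2 * Real.pi * (n * (1 / 2) : ℝ)))]

lemma jf_bound1 (m : ℤ) (hm : 0 < m) (g : ℂ → ℂ → ℂ)
    (c : ℤ × ℤ → ℂ)
    (habs : ∀ τ z : ℂ, 0 < τ.im → Summable (fun p : ℤ × ℤ =>
      ‖c p * Complex.exp (2 * Real.pi * Complex.I * ((p.1 : ℂ) * τ + (p.2 : ℂ) * z))‖))
    (hsum : ∀ τ z : ℂ, 0 < τ.im →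
      HasSum (fun p : ℤ × ℤ =>
        c p * Complex.exp (2 * Real.pi * Complex.I * ((p.1 : ℂ) * τ + (p.2 : ℂ) * z)))
        (g τ z))
    (hsupp : ∀ n r : ℤ, 4 * n * m - r ^ 2 < 0 → c (n, r) = 0) :
    ∃ C : ℝ, 0 ≤ C ∧ ∀ τ z : ℂ, 1 / 2 ≤ τ.im → 0 ≤ z.im → z.im ≤ τ.im →
      ‖g τ z‖ * Real.exp (-(2 * Real.pi * m * z.im ^ 2 / τ.im)) ≤ C := by
  have hA := (habs (I * (1 / 2 : ℝ)) 0 (by simp)).add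
    (habs (I * (1 / 2 : ℝ)) (I * (1 / 2 : ℝ)) (by simp))
  refine ⟨_, hA.hasSum.nonneg (fun p => add_nonneg (norm_nonneg _) (norm_nonneg _)),
    fun τ z hτ hz0 hz => ?_⟩
  have h1 := (hsum τ z (by linarith)).mul_right
    ((Real.exp (-(2 * Real.pi * m * z.im ^ 2 / τ.im)) : ℝ) : ℂ)
  have h2 := h1.norm_le_of_bounded hA.hasSum ?_
  · rw [norm_mul, Complex.norm_real, Real.norm_of_nonneg (Real.exp_pos _).le] at h2
    exact h2
  rintro ⟨n, r⟩
  by_cases hc : c (n, r) = 0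
  · simp [hc]
  have hnr : 0 ≤ 4 * n * m - r ^ 2 := by
    by_contra hh
    exact hc (hsupp n r (by omega))
  rw [norm_mul, norm_mul, norm_mul, norm_mul, Complex.norm_real,
    Real.norm_of_nonneg (Real.exp_pos _).le, jf_norm_exp, jf_norm_exp, jf_norm_exp, ← mul_add,
    mul_assoc]
  refine mul_le_mul_of_nonneg_left ?_ (norm_nonneg _)
  have := jf_term m n r hm hnr τ.im z.im hτ hz0 hz
  simpa using this

lemma jf_bound2 (m : ℤ) (g : ℂ → ℂ → ℂ)
    (transf₂ : ∀ lam mu : ℤ, ∀ τ z : ℂ, 0 < τ.im →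
      g τ (z + (lam : ℂ) * τ + (mu : ℂ)) =
        Complex.exp (2 * Real.pi * Complex.I *
            (-(m : ℂ) * (lam : ℂ) ^ 2 * τ - 2 * (m : ℂ) * (lam : ℂ) * z)) * g τ z)
    (C : ℝ) (hC : ∀ τ z : ℂ, 1 / 2 ≤ τ.im → 0 ≤ z.im → z.im ≤ τ.im →
      ‖g τ z‖ * Real.exp (-(2 * Real.pi * m * z.im ^ 2 / τ.im)) ≤ C)
    (τ z : ℂ) (hτ : 1 / 2 ≤ τ.im) :
    ‖g τ z‖ * Real.exp (-(2 * Real.pi * m * z.im ^ 2 / τ.im)) ≤ C := by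
  have hv : 0 < τ.im := by linarith
  let l : ℤ := ⌊z.im / τ.im⌋
  have hl1 : (l : ℝ) * τ.im ≤ z.im := by
    rw [← le_div_iff₀ hv]; exact Int.floor_le _
  have hl2 : z.im < (l + 1 : ℝ) * τ.im := by
    rw [← div_lt_iff₀ hv]; exact Int.lt_floor_add_one _
  obtain ⟨w, hw⟩ : ∃ w : ℂ, w = z - l * τ := ⟨_, rfl⟩
  have hwi : w.im = z.im - l * τ.im := by rw [hw]; simp
  have hz : z = w + (l : ℂ) * τ + ((0 : ℤ) : ℂ) := by rw [hw]; simp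
  have hzi : z.im = w.im + l * τ.im := by linarith
  have hg := transf₂ l 0 τ w hv
  rw [← hz] at hg
  have hb := hC τ w hτ (by linarith) (by linarith)
  rw [hg, norm_mul, jf_norm_exp]
  refine le_trans (le_of_eq ?_) hb
  rw [mul_comm _ ‖g τ w‖, mul_assoc, ← Real.exp_add]
  congr 2
  have : (-(m : ℂ) * (l : ℂ) ^ 2 * τ - 2 * (m : ℂ) * (l : ℂ) * w).im =
      -m * l ^ 2 * τ.im - 2 * m * l * w.im := by
    have e : (-(m : ℂ) * (l : ℂ) ^ 2 * τ - 2 * (m : ℂ) * (l : ℂ) * w) =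
      ((-m * l ^ 2 : ℝ) : ℂ) * τ - ((2 * m * l : ℝ) : ℂ) * w := by push_cast; ring
    rw [e, Complex.sub_im, Complex.im_ofReal_mul, Complex.im_ofReal_mul]
  rw [this, hzi]
  field_simp
  ring

lemma jf_bound3 (m : ℤ) (g : ℂ → ℂ → ℂ)
    (transf₁ : ∀ γ : Matrix.SpecialLinearGroup (Fin 2) ℤ, ∀ τ z : ℂ, 0 < τ.im →
      g ((((γ : Matrix (Fin 2) (Fin 2) ℤ) 0 0 : ℂ) * τ + ((γ : Matrix (Fin 2) (Fin 2) ℤ) 0 1 : ℂ)) /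
           (((γ : Matrix (Fin 2) (Fin 2) ℤ) 1 0 : ℂ) * τ + ((γ : Matrix (Fin 2) (Fin 2) ℤ) 1 1 : ℂ)))
        (z / (((γ : Matrix (Fin 2) (Fin 2) ℤ) 1 0 : ℂ) * τ + ((γ : Matrix (Fin 2) (Fin 2) ℤ) 1 1 : ℂ))) =
      Complex.exp (2 * Real.pi * Complex.I * (m : ℂ) * ((γ : Matrix (Fin 2) (Fin 2) ℤ) 1 0 : ℂ) * z ^ 2 /
          (((γ : Matrix (Fin 2) (Fin 2) ℤ) 1 0 : ℂ) * τ + ((γ : Matrix (Fin 2) (Fin 2) ℤ) 1 1 : ℂ))) *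
        g τ z)
    (C : ℝ) (hC : ∀ τ z : ℂ, 1 / 2 ≤ τ.im →
      ‖g τ z‖ * Real.exp (-(2 * Real.pi * m * z.im ^ 2 / τ.im)) ≤ C)
    (τ : ℂ) (x : ℝ) (hτ : 0 < τ.im) : ‖g τ x‖ ≤ C := by
  obtain ⟨γ, h1, h2, h3⟩ := jf_sl τ hτ
  have hb := hC _ ((x : ℂ) / (((γ : Matrix (Fin 2) (Fin 2) ℤ) 1 0 : ℂ) * τ +
    ((γ : Matrix (Fin 2) (Fin 2) ℤ) 1 1 : ℂ))) h1
  rw [transf₁ γ τ x hτ, h2, norm_mul] at hb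
  set k : ℤ := (γ : Matrix (Fin 2) (Fin 2) ℤ) 1 0
  set j : ℂ := (k : ℂ) * τ + ((γ : Matrix (Fin 2) (Fin 2) ℤ) 1 1 : ℂ) with hj
  have hji : j.im = k * τ.im := by rw [hj]; simp
  have e : 2 * Real.pi * Complex.I * (m : ℂ) * (k : ℂ) * (x : ℂ) ^ 2 / j =
      2 * Real.pi * Complex.I * (((m * k * x ^ 2 : ℝ) : ℂ) * j⁻¹) := by
    push_cast; ring
  have e2 : ((x : ℂ) / j).im = -(x * (k * τ.im) / Complex.normSq j) := by
    rw [div_eq_mul_inv, Complex.im_ofReal_mul, Complex.inv_im, hji]; ring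
  rw [e, jf_norm_exp, Complex.im_ofReal_mul, Complex.inv_im, e2, hji, mul_comm _ ‖g τ x‖,
    mul_assoc, ← Real.exp_add] at hb
  refine le_trans (le_of_eq ?_) hb
  symm
  convert mul_one _
  rw [Real.exp_eq_one_iff]
  field_simp
  ring

lemma jf_period (m : ℤ) (g : ℂ → ℂ → ℂ)
    (transf₂ : ∀ lam mu : ℤ, ∀ τ z : ℂ, 0 < τ.im →
      g τ (z + (lam : ℂ) * τ + (mu : ℂ)) =
        Complex.exp (2 * Real.pi * Complex.I *
            (-(m : ℂ) * (lam : ℂ) ^ 2 * τ - 2 * (m : ℂ) * (lam : ℂ) * z)) * g τ z)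
    (c : ℤ × ℤ → ℂ)
    (habs : ∀ τ z : ℂ, 0 < τ.im → Summable (fun p : ℤ × ℤ =>
      ‖c p * Complex.exp (2 * Real.pi * Complex.I * ((p.1 : ℂ) * τ + (p.2 : ℂ) * z))‖))
    (hsum : ∀ τ z : ℂ, 0 < τ.im →
      HasSum (fun p : ℤ × ℤ =>
        c p * Complex.exp (2 * Real.pi * Complex.I * ((p.1 : ℂ) * τ + (p.2 : ℂ) * z)))
        (g τ z))
    (n r l : ℤ) : c (n + r * l + m * l ^ 2, r + 2 * m * l) = c (n, r) := by
  let s1 : ℤ × ℤ ≃ ℤ × ℤ :=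
    { toFun := fun p => (p.1 - p.2 * l, p.2)
      invFun := fun p => (p.1 + p.2 * l, p.2)
      left_inv := fun p => by simp
      right_inv := fun p => by simp }
  let s2 : ℤ × ℤ ≃ ℤ × ℤ :=
    { toFun := fun p => (p.1 + m * l ^ 2, p.2 + 2 * m * l)
      invFun := fun p => (p.1 - m * l ^ 2, p.2 - 2 * m * l)
      left_inv := fun p => by simp
      right_inv := fun p => by simp }
  let E : ℤ × ℤ → ℂ := fun p => Complex.exp (2 * Real.pi * Complex.I * ((p.1 : ℂ) * I))
  have k1 : ∀ u x : ℝ, HasSum (fun p : ℤ × ℤ => (c (s1 p) * E p) *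
      Complex.exp (2 * Real.pi * Complex.I * ((p.1 : ℂ) * u + (p.2 : ℂ) * x)))
      (g (u + I) (x + (l : ℂ) * (u + I) + ((0 : ℤ) : ℂ))) := by
    intro u x
    have := (s1.hasSum_iff).mpr (hsum (u + I) (x + (l : ℂ) * (u + I) + ((0 : ℤ) : ℂ)) (by simp))
    convert this using 2 with p
    simp only [Function.comp_apply, E, mul_assoc, ← Complex.exp_add]
    congr 2
    simp [s1]
    ring
  have k2 : ∀ u x : ℝ, HasSum (fun p : ℤ × ℤ => (c (s2 p) * E p) *
      Complex.exp (2 * Real.pi * Complex.I * ((p.1 : ℂ) * u + (p.2 : ℂ) * x)))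
      (g (u + I) (x + (l : ℂ) * (u + I) + ((0 : ℤ) : ℂ))) := by
    intro u x
    rw [transf₂ l 0 _ _ (by simp)]
    have := ((s2.hasSum_iff).mpr (hsum (u + I) x (by simp))).mul_left (Complex.exp (2 * Real.pi * Complex.I *
            (-(m : ℂ) * (l : ℂ) ^ 2 * (u + I) - 2 * (m : ℂ) * (l : ℂ) * x)))
    refine (congrArg (fun F : ℤ × ℤ → ℂ => HasSum F _) (funext fun p => ?_)).mpr this
    have e : E p * Complex.exp (2 * Real.pi * Complex.I * ((p.1 : ℂ) * u + (p.2 : ℂ) * x)) =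
        Complex.exp (2 * Real.pi * Complex.I *
          (-(m : ℂ) * (l : ℂ) ^ 2 * (u + I) - 2 * (m : ℂ) * (l : ℂ) * x)) *
        Complex.exp (2 * Real.pi * Complex.I *
          (((s2 p).1 : ℂ) * (u + I) + ((s2 p).2 : ℂ) * x)) := by
      simp only [E, ← Complex.exp_add]
      congr 1
      simp [s2]
      ring
    simp only [Function.comp_apply]
    linear_combination (c (s2 p)) * e
  have n1 : Summable (fun p => ‖c (s1 p) * E p‖) := by
    have := (s1.summable_iff).mpr (habs I ((l : ℂ) * I) (by simp))
    convert this using 2 with p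
    simp only [Function.comp_apply, E]
    congr 3
    simp [s1]
    ring
  have n2 : Summable (fun p => ‖c (s2 p) * E p‖) := by
    have := ((s2.summable_iff).mpr (habs I 0 (by simp))).mul_left ‖(Complex.exp (2 * Real.pi * Complex.I *
            (-(m : ℂ) * (l : ℂ) ^ 2 * I)))‖
    refine (summable_congr (fun p => ?_)).mpr this
    have e : E p = Complex.exp (2 * Real.pi * Complex.I * (-(m : ℂ) * (l : ℂ) ^ 2 * I)) *
        Complex.exp (2 * Real.pi * Complex.I *
          (((s2 p).1 : ℂ) * I + ((s2 p).2 : ℂ) * 0)) := by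
      simp only [E, ← Complex.exp_add]
      congr 1
      simp [s2]
      ring
    simp only [Function.comp_apply]
    rw [← norm_mul]
    congr 1
    linear_combination (c (s2 p)) * e
  have hb := jf_bessel (fun p => c (s1 p) * E p - c (s2 p) * E p)
    (Summable.of_nonneg_of_le (fun _ => norm_nonneg _) (fun _ => norm_sub_le _ _) (n1.add n2))
    (fun _ _ => 0)
    (fun u x => by
      have := (k1 u x).sub (k2 u x)
      rw [sub_self] at this
      simpa only [sub_mul] using this) 0 le_rfl (by simp) {(n + r * l, r)}
  have hz : c (s1 (n + r * l, r)) * E (n + r * l, r) - c (s2 (n + r * l, r)) * E (n + r * l, r) = 0 := by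
    rw [Finset.sum_singleton] at hb
    rw [← norm_eq_zero]
    nlinarith [norm_nonneg (c (s1 (n + r * l, r)) * E (n + r * l, r) - c (s2 (n + r * l, r)) * E (n + r * l, r))]
  rw [← sub_mul] at hz
  have := (mul_eq_zero.mp hz).resolve_right (Complex.exp_ne_zero _)
  have := sub_eq_zero.mp this
  simp [s1, s2] at this
  exact this.symm

/-- a Jacobi form of weight `0` and positive index `m` — a holomorphic
function `g : ℍ × ℂ → ℂ` satisfying the Jacobi transformation laws of weight `0` and
index `m`, with an absolutely convergent Fourier expansion
`g(τ,z) = Σ c(n,r) qⁿζʳ` supported on `4nm − r² ≥ 0` — is identically zero. -/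
theorem stmt_0 (m : ℤ) (hm : 0 < m) (g : ℂ → ℂ → ℂ)
    (hol : DifferentiableOn ℂ (fun p : ℂ × ℂ => g p.1 p.2) {p : ℂ × ℂ | 0 < p.1.im})
    (transf₁ : ∀ γ : Matrix.SpecialLinearGroup (Fin 2) ℤ, ∀ τ z : ℂ, 0 < τ.im →
      g ((((γ : Matrix (Fin 2) (Fin 2) ℤ) 0 0 : ℂ) * τ + ((γ : Matrix (Fin 2) (Fin 2) ℤ) 0 1 : ℂ)) /
           (((γ : Matrix (Fin 2) (Fin 2) ℤ) 1 0 : ℂ) * τ + ((γ : Matrix (Fin 2) (Fin 2) ℤ) 1 1 : ℂ)))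
        (z / (((γ : Matrix (Fin 2) (Fin 2) ℤ) 1 0 : ℂ) * τ + ((γ : Matrix (Fin 2) (Fin 2) ℤ) 1 1 : ℂ))) =
      Complex.exp (2 * Real.pi * Complex.I * (m : ℂ) * ((γ : Matrix (Fin 2) (Fin 2) ℤ) 1 0 : ℂ) * z ^ 2 /
          (((γ : Matrix (Fin 2) (Fin 2) ℤ) 1 0 : ℂ) * τ + ((γ : Matrix (Fin 2) (Fin 2) ℤ) 1 1 : ℂ))) *
        g τ z)
    (transf₂ : ∀ lam mu : ℤ, ∀ τ z : ℂ, 0 < τ.im →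
      g τ (z + (lam : ℂ) * τ + (mu : ℂ)) =
        Complex.exp (2 * Real.pi * Complex.I *
            (-(m : ℂ) * (lam : ℂ) ^ 2 * τ - 2 * (m : ℂ) * (lam : ℂ) * z)) * g τ z)
    (c : ℤ × ℤ → ℂ)
    (habs : ∀ τ z : ℂ, 0 < τ.im → Summable (fun p : ℤ × ℤ =>
      ‖c p * Complex.exp (2 * Real.pi * Complex.I * ((p.1 : ℂ) * τ + (p.2 : ℂ) * z))‖))
    (hsum : ∀ τ z : ℂ, 0 < τ.im →
      HasSum (fun p : ℤ × ℤ =>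
        c p * Complex.exp (2 * Real.pi * Complex.I * ((p.1 : ℂ) * τ + (p.2 : ℂ) * z)))
        (g τ z))
    (hsupp : ∀ n r : ℤ, 4 * n * m - r ^ 2 < 0 → c (n, r) = 0) :
    ∀ τ z : ℂ, 0 < τ.im → g τ z = 0 := by
  obtain ⟨C, hC0, hC1⟩ := jf_bound1 m hm g c habs hsum hsupp
  have hC2 := jf_bound2 m g transf₂ C hC1
  have hC3 := jf_bound3 m g transf₁ C hC2
  have hper := jf_period m g transf₂ c habs hsum
  have hbv : ∀ v : ℝ, 0 < v → ∀ S : Finset (ℤ × ℤ),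
      ∑ p ∈ S, (‖c p‖ * Real.exp (-(2 * Real.pi * (p.1 * v)))) ^ 2 ≤ C ^ 2 := by
    intro v hv S
    have hn : ∀ p : ℤ × ℤ, ‖c p * Complex.exp (2 * Real.pi * Complex.I * (p.1 * (I * v)))‖ =
        ‖c p‖ * Real.exp (-(2 * Real.pi * (p.1 * v))) := by
      intro p
      rw [norm_mul, jf_norm_exp]
      simp
    have := jf_bessel (fun p => c p * Complex.exp (2 * Real.pi * Complex.I * (p.1 * (I * v))))
      (by simpa using habs (I * v) 0 (by simpa using hv)) (fun u x => g (u + I * v) x)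
      (fun u x => by
        convert hsum (u + I * v) x (by simpa using hv) using 2 with p
        rw [mul_assoc, ← Complex.exp_add]
        congr 2
        ring) C hC0 (fun u x => hC3 _ x (by simpa using hv)) S
    simpa only [hn] using this
  have hb0 : ∀ S : Finset (ℤ × ℤ), ∑ p ∈ S, ‖c p‖ ^ 2 ≤ C ^ 2 := by
    intro S
    have hcont : Continuous (fun v : ℝ =>
        ∑ p ∈ S, (‖c p‖ * Real.exp (-(2 * Real.pi * (p.1 * v)))) ^ 2) := by fun_prop
    have ht := (hcont.tendsto 0).mono_left (nhdsWithin_le_nhds (s := Set.Ioi 0))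
    have := le_of_tendsto ht (Filter.eventually_of_mem self_mem_nhdsWithin (fun v hv => hbv v hv S))
    simpa using this
  have hc0 : ∀ p, c p = 0 := by
    rintro ⟨n, r⟩
    by_contra hne
    have hpos : 0 < ‖c (n, r)‖ ^ 2 := by positivity
    obtain ⟨N, hN⟩ := exists_nat_gt (C ^ 2 / ‖c (n, r)‖ ^ 2)
    rw [div_lt_iff₀ hpos] at hN
    have hinj : Function.Injective
        (fun l : ℕ => ((n + r * l + m * (l : ℤ) ^ 2, r + 2 * m * l) : ℤ × ℤ)) := by
      intro a b hab
      have h2 := congrArg Prod.snd hab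
      simp only [add_right_inj] at h2
      exact_mod_cast mul_left_cancel₀ (by positivity) h2
    have h := hb0 ((Finset.range N).map ⟨_, hinj⟩)
    rw [Finset.sum_map] at h
    simp only [Function.Embedding.coeFn_mk, hper] at h
    simp at h
    linarith
  intro τ z hτ
  refine (hsum τ z hτ).unique ?_
  simp only [hc0, zero_mul]
  exact hasSum_zero
end

section
/- Let ν : ℤ_{>0} → ℤ_{≥0} be finitely supported, and set P(X) = Π_{r≥1} Φ_r(X)^{ν(r)} ∈ ℤ[X]. Then P(X) divides P(X²) in ℚ[X] if and only if ν(r) ≥ ν(2r) for every integer r ≥ 1. -/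
open Polynomial

lemma aux_dvd (S : Finset ℕ) (hS : ∀ m ∈ S, 0 < m) (a b : ℕ → ℕ) :
    (∏ m ∈ S, cyclotomic m ℚ ^ a m) ∣ (∏ m ∈ S, cyclotomic m ℚ ^ b m) ↔
      ∀ m ∈ S, a m ≤ b m := by
  constructor
  · intro h m hm
    have h1 : cyclotomic m ℚ ^ a m ∣ ∏ m ∈ S, cyclotomic m ℚ ^ b m :=
      (Finset.dvd_prod_of_mem (fun m => cyclotomic m ℚ ^ a m) hm).trans h
    rw [← Finset.mul_prod_erase S _ hm] at h1
    have hc : IsCoprime (cyclotomic m ℚ ^ a m)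
        (∏ x ∈ S.erase m, cyclotomic x ℚ ^ b x) := by
      refine IsCoprime.prod_right fun i hi => ?_
      exact (cyclotomic.isCoprime_rat (Finset.ne_of_mem_erase hi).symm).pow
    have h2 := hc.dvd_of_dvd_mul_right h1
    have hirr := cyclotomic.irreducible_rat (hS m hm)
    exact (pow_dvd_pow_iff hirr.ne_zero hirr.not_isUnit).1 h2
  · intro h
    exact Finset.prod_dvd_prod_of_dvd _ _ fun m hm => pow_dvd_pow _ (h m hm)

lemma aux_comp (r : ℕ) : (cyclotomic r ℚ).comp (X ^ 2) =
    cyclotomic (2 * r) ℚ * (if 2 ∣ r then 1 else cyclotomic r ℚ) := by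
  rw [← expand_eq_comp_X_pow]
  split_ifs with h
  · rw [cyclotomic_expand_eq_cyclotomic Nat.prime_two h, mul_one, mul_comm]
  · rw [cyclotomic_expand_eq_cyclotomic_mul Nat.prime_two h, mul_comm r 2]

/-- For a finitely supported `ν : ℤ_{>0} → ℤ_{≥0}` and
`P(X) = Π_{r≥1} Φ_r(X)^{ν(r)} ∈ ℤ[X]`, the polynomial `P(X)` divides `P(X²)` in `ℚ[X]`
if and only if `ν(r) ≥ ν(2r)` for every `r ≥ 1`.  (Finite support is encoded by a bound
`N` with `ν r = 0` for `r > N`.) -/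
theorem stmt_2 (ν : ℕ → ℕ) (N : ℕ) (hN : ∀ r : ℕ, N < r → ν r = 0) :
    (Polynomial.map (Int.castRingHom ℚ)
        (∏ r ∈ Finset.Icc 1 N, Polynomial.cyclotomic r ℤ ^ ν r) ∣
      Polynomial.map (Int.castRingHom ℚ)
        ((∏ r ∈ Finset.Icc 1 N, Polynomial.cyclotomic r ℤ ^ ν r).comp
          (Polynomial.X ^ 2)))
    ↔ ∀ r : ℕ, 1 ≤ r → ν (2 * r) ≤ ν r := by
  have hP : Polynomial.map (Int.castRingHom ℚ)
      (∏ r ∈ Finset.Icc 1 N, Polynomial.cyclotomic r ℤ ^ ν r) =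
      ∏ r ∈ Finset.Icc 1 N, cyclotomic r ℚ ^ ν r := by
    simp [Polynomial.map_prod]
  have hsub : Finset.Icc 1 N ⊆ Finset.Icc 1 (2 * N) :=
    Finset.Icc_subset_Icc_right (by omega)
  have hP2 : ∏ r ∈ Finset.Icc 1 N, cyclotomic r ℚ ^ ν r =
      ∏ r ∈ Finset.Icc 1 (2 * N), cyclotomic r ℚ ^ ν r := by
    refine Finset.prod_subset hsub fun r hr hr' => ?_
    simp only [Finset.mem_Icc] at hr hr'
    rw [hN r (by omega), pow_zero]
  have hQ : (∏ r ∈ Finset.Icc 1 N, cyclotomic r ℚ ^ ν r).comp (X ^ 2) =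
      ∏ m ∈ Finset.Icc 1 (2 * N),
        cyclotomic m ℚ ^ (if 2 ∣ m then ν (m / 2) else ν m) := by
    rw [Polynomial.prod_comp]
    simp only [Polynomial.pow_comp, aux_comp, mul_pow]
    rw [Finset.prod_mul_distrib,
      ← Finset.prod_filter_mul_prod_filter_not (Finset.Icc 1 (2 * N)) (fun m => 2 ∣ m)]
    congr 1
    · refine Finset.prod_nbij' (fun r => 2 * r) (fun m => m / 2) ?_ ?_ ?_ ?_ ?_
      · intro r hr
        simp only [Finset.mem_filter, Finset.mem_Icc] at hr ⊢
        omega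
      · intro r hr
        simp only [Finset.mem_filter, Finset.mem_Icc] at hr ⊢
        omega
      · intro r hr
        simp
      · intro r hr
        simp only [Finset.mem_filter, Finset.mem_Icc] at hr ⊢
        omega
      · intro r hr
        simp
    · rw [Finset.prod_filter]
      have : ∀ r ∈ Finset.Icc 1 (2 * N), r ∉ Finset.Icc 1 N →
          (if 2 ∣ r then (1 : ℚ[X]) else cyclotomic r ℚ) ^ ν r = 1 := by
        intro r hr hr'
        simp only [Finset.mem_Icc] at hr hr'
        rw [hN r (by omega), pow_zero]
      rw [Finset.prod_subset hsub this]
      refine Finset.prod_congr rfl fun r _ => ?_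
      by_cases h : 2 ∣ r <;> simp [h]
  rw [Polynomial.map_comp, hP, Polynomial.map_pow, Polynomial.map_X, hQ, hP2,
    aux_dvd _ (fun m hm => (Finset.mem_Icc.1 hm).1)]
  constructor
  · intro h r hr
    by_cases hrN : r ≤ N
    · have := h (2 * r) (Finset.mem_Icc.2 ⟨by omega, by omega⟩)
      simpa using this
    · rw [hN (2 * r) (by omega)]
      exact Nat.zero_le _
  · intro h m hm
    have hm1 := (Finset.mem_Icc.1 hm).1
    split_ifs with h2
    · obtain ⟨k, rfl⟩ := h2
      simpa using h k (by omega)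
    · exact le_rfl
end

section
/- Let ν : ℤ_{>0} → ℤ_{≥0} be finitely supported, and set P(X) = Π_{r≥1} Φ_r(X)^{ν(r)} ∈ ℤ[X]. Then the polynomial identity P(X²) · Π_{r≥1} Φ_{2r}(X)^{ν(2r)} = P(X) · Π_{r≥1} Φ_{2r}(X)^{ν(r)} holds in ℤ[X]. -/
open Polynomial

/-- For a finitely supported `ν : ℤ_{>0} → ℤ_{≥0}` and
`P(X) = Π_{r≥1} Φ_r(X)^{ν(r)} ∈ ℤ[X]`, the identity
`P(X²) · Π_{r≥1} Φ_{2r}(X)^{ν(2r)} = P(X) · Π_{r≥1} Φ_{2r}(X)^{ν(r)}` holds in `ℤ[X]`.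
(Finite support is encoded by a bound `N` with `ν r = 0` for `r > N`.) -/
theorem stmt_3 (ν : ℕ → ℕ) (N : ℕ) (hN : ∀ r : ℕ, N < r → ν r = 0) :
    (∏ r ∈ Finset.Icc 1 N, Polynomial.cyclotomic r ℤ ^ ν r).comp (Polynomial.X ^ 2) *
        ∏ r ∈ Finset.Icc 1 N, Polynomial.cyclotomic (2 * r) ℤ ^ ν (2 * r) =
      (∏ r ∈ Finset.Icc 1 N, Polynomial.cyclotomic r ℤ ^ ν r) *
        ∏ r ∈ Finset.Icc 1 N, Polynomial.cyclotomic (2 * r) ℤ ^ ν r := by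
  have h1 : (∏ r ∈ Finset.Icc 1 N, Polynomial.cyclotomic r ℤ ^ ν r).comp (Polynomial.X ^ 2) =
      (∏ r ∈ Finset.Icc 1 N, Polynomial.cyclotomic (2 * r) ℤ ^ ν r) *
        ∏ r ∈ Finset.Icc 1 N, (if 2 ∣ r then 1 else Polynomial.cyclotomic r ℤ ^ ν r) := by
    rw [← Polynomial.expand_eq_comp_X_pow, map_prod, ← Finset.prod_mul_distrib]
    refine Finset.prod_congr rfl fun r _ => ?_
    rw [map_pow]
    split_ifs with h
    · rw [Polynomial.cyclotomic_expand_eq_cyclotomic Nat.prime_two h, mul_one, mul_comm r 2]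
    · rw [Polynomial.cyclotomic_expand_eq_cyclotomic_mul Nat.prime_two h, mul_pow, mul_comm r 2]
  have h2 : ∏ r ∈ Finset.Icc 1 N, Polynomial.cyclotomic (2 * r) ℤ ^ ν (2 * r) =
      ∏ r ∈ Finset.Icc 1 N, (if 2 ∣ r then Polynomial.cyclotomic r ℤ ^ ν r else 1) := by
    rw [← Finset.prod_filter]
    symm
    have h3 : ∏ r ∈ (Finset.Icc 1 N).image (fun r => 2 * r), Polynomial.cyclotomic r ℤ ^ ν r =
        ∏ r ∈ Finset.Icc 1 N, Polynomial.cyclotomic (2 * r) ℤ ^ ν (2 * r) :=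
      Finset.prod_image (fun a _ b _ h => by simpa using h)
    rw [← h3]
    apply Finset.prod_subset
    · intro r hr
      simp only [Finset.mem_filter, Finset.mem_Icc, Finset.mem_image] at hr ⊢
      obtain ⟨⟨ha, hb⟩, k, rfl⟩ := hr
      exact ⟨k, by omega, rfl⟩
    · intro r hr hr'
      simp only [Finset.mem_filter, Finset.mem_Icc, Finset.mem_image] at hr hr'
      rw [hN r (by omega), pow_zero]
  have h4 : ∏ r ∈ Finset.Icc 1 N, Polynomial.cyclotomic r ℤ ^ ν r =
      (∏ r ∈ Finset.Icc 1 N, (if 2 ∣ r then 1 else Polynomial.cyclotomic r ℤ ^ ν r)) *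
      ∏ r ∈ Finset.Icc 1 N, (if 2 ∣ r then Polynomial.cyclotomic r ℤ ^ ν r else 1) := by
    rw [← Finset.prod_mul_distrib]
    refine Finset.prod_congr rfl fun r _ => ?_
    split_ifs <;> simp
  rw [h1, h2, h4]
  ring
end

section
/- Let a(ζ), b(ζ) ∈ ℤ[ζ,ζ⁻¹] be Laurent polynomials over ℤ with b nonzero, and suppose b(ζ) = ζ^{−β}·b̃(ζ) where β ∈ ℤ and b̃(ζ) = Σ_{i=0}^{d} b̃_i ζ^i ∈ ℤ[ζ] is a polynomial of degree d with b̃_0 = ±1 and b̃_d = ±1. Then there exist a unique Laurent polynomial Q(ζ) ∈ ℤ[ζ,ζ⁻¹] and a unique polynomial R(ζ) ∈ ℤ[ζ] with deg R < d such that a(ζ) = Q(ζ)·b(ζ) + R(ζ). -/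
open LaurentPolynomial

/-- Laurent polynomial division algorithm: if
`b(ζ) = ζ^{−β}·b̃(ζ) ∈ ℤ[ζ,ζ⁻¹]` with `b̃ ∈ ℤ[ζ]` of degree `d` whose constant and
top coefficients are `±1`, then any `a(ζ) ∈ ℤ[ζ,ζ⁻¹]` has a unique expression
`a = Q·b + R` with `Q ∈ ℤ[ζ,ζ⁻¹]` and `R ∈ ℤ[ζ]`, `deg R < d`. -/
theorem stmt_6 (a b : LaurentPolynomial ℤ) (hb : b ≠ 0)
    (β : ℤ) (btil : Polynomial ℤ) (d : ℕ)
    (hdeg : btil.natDegree = d)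
    (h0 : btil.coeff 0 = 1 ∨ btil.coeff 0 = -1)
    (hd : btil.coeff d = 1 ∨ btil.coeff d = -1)
    (hb_eq : b = LaurentPolynomial.T (-β) * btil.toLaurent) :
    ∃! QR : LaurentPolynomial ℤ × Polynomial ℤ,
      QR.2.degree < (d : WithBot ℕ) ∧ a = QR.1 * b + QR.2.toLaurent := by
  obtain ⟨e, he, hmon⟩ : ∃ e : ℤ, e * e = 1 ∧ (Polynomial.C e * btil).Monic := by
    have hl : btil.leadingCoeff = btil.coeff d := by rw [← hdeg]; rfl
    refine ⟨btil.coeff d, ?_, ?_⟩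
    · rcases hd with h | h <;> rw [h] <;> norm_num
    · rw [Polynomial.Monic, Polynomial.leadingCoeff_mul, Polynomial.leadingCoeff_C, hl]
      rcases hd with h | h <;> rw [h] <;> norm_num
  obtain ⟨B, hB⟩ : ∃ B, B = Polynomial.C e * btil := ⟨_, rfl⟩
  rw [← hB] at hmon
  have hCe : (Polynomial.C e * Polynomial.C e : Polynomial ℤ) = 1 := by
    rw [← Polynomial.C_mul, he, Polynomial.C_1]
  have hbB : btil = Polynomial.C e * B := by
    rw [hB, ← mul_assoc, hCe, one_mul]
  have hb0 : btil ≠ 0 := by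
    rintro rfl
    simp at h0
  have he0 : e ≠ 0 := by rintro rfl; simp at he
  have hBdeg : B.degree = (d : WithBot ℕ) := by
    rw [hB, Polynomial.degree_C_mul he0, Polynomial.degree_eq_natDegree hb0, hdeg]
  have hcop : ∀ n : ℕ, IsCoprime (Polynomial.X ^ n) btil := by
    intro n
    apply IsCoprime.pow_left
    have h := Polynomial.divX_mul_X_add btil
    rcases h0 with h1 | h1
    · refine ⟨-btil.divX, 1, ?_⟩
      rw [h1] at h
      simp only [map_one] at h
      linear_combination -h
    · refine ⟨btil.divX, -1, ?_⟩
      rw [h1] at h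
      simp only [map_neg, map_one] at h
      linear_combination h
  have hTT : ∀ m : ℤ, (T m * T (-m) : LaurentPolynomial ℤ) = 1 := by
    intro m
    rw [← T_add, add_neg_cancel, T_zero]
  have hex : ∃ QR : LaurentPolynomial ℤ × Polynomial ℤ,
      QR.2.degree < (d : WithBot ℕ) ∧ a = QR.1 * b + QR.2.toLaurent := by
    obtain ⟨n, f, hf⟩ := exists_T_pow a
    obtain ⟨u, v, huv⟩ := hcop n
    refine ⟨⟨T β * (Polynomial.toLaurent (Polynomial.C e * ((u * f) /ₘ B))
      + T (-n) * Polynomial.toLaurent (v * f)), (u * f) %ₘ B⟩, ?_, ?_⟩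
    · rw [← hBdeg]
      exact Polynomial.degree_modByMonic_lt _ hmon
    · have h1 := Polynomial.modByMonic_add_div (u * f) B
      have h2 : f = Polynomial.X ^ n * ((u * f) %ₘ B + btil * (Polynomial.C e * ((u * f) /ₘ B)))
          + btil * (v * f) := by
        have h3 : btil * (Polynomial.C e * ((u * f) /ₘ B)) = B * ((u * f) /ₘ B) := by
          rw [hB]; ring
        rw [h3, h1]
        linear_combination (-f) * huv
      have h4 := congrArg Polynomial.toLaurent h2
      generalize (u * f) %ₘ B = r at *
      generalize Polynomial.C e * ((u * f) /ₘ B) = q at *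
      generalize v * f = w at *
      rw [hf] at h4
      simp only [map_add, map_mul, Polynomial.toLaurent_X_pow] at h4
      dsimp only
      rw [hb_eq]
      have hn := hTT n
      have hβ := hTT β
      generalize Polynomial.toLaurent r = r at *
      generalize Polynomial.toLaurent q = q at *
      generalize Polynomial.toLaurent w = w at *
      generalize Polynomial.toLaurent btil = bt at *
      linear_combination T (-(n:ℤ)) * h4 - (a - r - bt * q) * hn - (q + T (-(n:ℤ)) * w) * bt * hβ
  obtain ⟨⟨Q, R⟩, hR, hQ⟩ := hex
  refine ⟨(Q, R), ⟨hR, hQ⟩, ?_⟩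
  rintro ⟨Q', R'⟩ ⟨hR', hQ'⟩
  dsimp only at *
  have hRR : R - R' = 0 := by
    obtain ⟨n, s, hs⟩ := exists_T_pow ((Q' - Q) * T (-β))
    have h1 : s * btil = Polynomial.X ^ n * (R - R') := by
      apply Polynomial.toLaurent_injective
      simp only [map_mul, map_sub, Polynomial.toLaurent_X_pow]
      rw [hs]
      rw [hb_eq] at hQ hQ'
      linear_combination T (n:ℤ) * (hQ - hQ')
    have h2 : btil ∣ R - R' :=
      (hcop n).symm.dvd_of_dvd_mul_left ⟨s, by rw [← h1, mul_comm]⟩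
    have h3 : B ∣ R - R' := by
      obtain ⟨c, hc⟩ := h2
      exact ⟨Polynomial.C e * c, by rw [hc, hbB]; ring⟩
    apply Polynomial.eq_zero_of_dvd_of_degree_lt h3
    rw [hBdeg]
    exact (Polynomial.degree_sub_le _ _).trans_lt (max_lt hR hR')
  have hR1 : R' = R := (sub_eq_zero.mp hRR).symm
  subst hR1
  have h5 : Q' * b = Q * b := by linear_combination hQ - hQ'
  rw [mul_right_cancel₀ hb h5]
end

section
/- Let k be an integer and n a positive integer. Let Γ be a subgroup of SL₂(ℤ) of finite index I containing the principal congruence subgroup Γ(n). Let f : ℍ → ℂ be a modular form of weight k for Γ: f is holomorphic, f((aτ+b)/(cτ+d)) = (cτ+d)^k f(τ) for all [[a,b],[c,d]] ∈ Γ, and for every g ∈ SL₂(ℤ) the function f|_k g is bounded on {τ : Im τ ≥ 1}. Then f(τ+n) = f(τ), so f has a Fourier expansion f(τ) = Σ_{j≥0} a_j e(jτ/n); and if a_j = 0 for every integer j with 0 ≤ j ≤ nkI/12, then f is identically zero. -/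
open Complex

section helpers
open UpperHalfPlane Filter Topology ModularForm MatrixGroups Function Matrix.SpecialLinearGroup
open scoped Manifold

/-- dividing out vanishing coefficients leaves something bounded at infinity -/
lemma aux_div_bounded {h : ℝ} (hh : 0 < h) {F : ℍ → ℂ} {c : ℕ → ℂ} (m : ℕ)
    (hF : ∀ τ : ℍ, HasSum (fun j ↦ c j • Periodic.qParam h τ ^ j) (F τ))
    (hc : ∀ j < m, c j = 0) :
    IsBoundedAtImInfty (fun τ : ℍ ↦ F τ / Periodic.qParam h τ ^ m) := by
  refine isBoundedAtImInfty_of_hasSum_qExpansion (c := fun j ↦ c (j + m)) hh fun τ ↦ ?_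
  have hq : Periodic.qParam h (τ : ℂ) ≠ 0 := Periodic.qParam_ne_zero _
  have h1 := (hasSum_nat_add_iff' m).mpr (hF τ)
  have h2 : ∑ i ∈ Finset.range m, c i • Periodic.qParam h (τ : ℂ) ^ i = 0 :=
    Finset.sum_eq_zero fun i hi ↦ by simp [hc i (Finset.mem_range.mp hi)]
  rw [h2, sub_zero] at h1
  have h3 := h1.div_const (Periodic.qParam h (τ : ℂ) ^ m)
  refine h3.congr_fun fun j ↦ ?_
  rw [smul_eq_mul, smul_eq_mul, pow_add]
  field_simp

lemma aux_coeff_zero {n : ℕ} (hn : 0 < n) {N : ℍ → ℂ} {c : ℕ → ℂ} {m d : ℕ}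
    (hN : ∀ τ : ℍ, HasSum (fun j ↦ c j • Periodic.qParam 1 τ ^ j) (N τ))
    (hb : IsBoundedAtImInfty (fun τ : ℍ ↦ N τ / Periodic.qParam n τ ^ m))
    (hd : n * d < m) : ∀ i ≤ d, c i = 0 := by
  intro i
  induction i using Nat.strong_induction_on with | _ i ih =>
  intro hi
  have hn' : (0 : ℝ) < n := by exact_mod_cast hn
  set N' : ℍ → ℂ := fun τ ↦ N τ - c i * Periodic.qParam 1 τ ^ i with hN'
  have hs : ∀ τ : ℍ, HasSum (fun j ↦ (if j = i then 0 else c j) • Periodic.qParam 1 τ ^ j) (N' τ) := by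
    intro τ
    have h1 := (hN τ).sub (hasSum_ite_eq i (c i * Periodic.qParam 1 (τ : ℂ) ^ i))
    refine h1.congr_fun fun j ↦ ?_
    by_cases hj : j = i
    · subst hj; simp
    · simp [hj]
  have hb' := aux_div_bounded one_pos (i + 1) hs (fun j hj ↦ by
    split_ifs with h
    · rfl
    · exact ih j (by omega) (by omega))
  have t1 : Tendsto (fun τ : ℍ ↦ Periodic.qParam n (τ : ℂ) ^ (m - n * i)) atImInfty (𝓝 0) := by
    have := (qParam_tendsto_atImInfty hn').pow (m - n * i)
    rwa [zero_pow (by have := Nat.mul_le_mul_left n hi; omega)] at this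
  have t2 := qParam_tendsto_atImInfty one_pos
  have t3 : Tendsto (fun τ : ℍ ↦ Periodic.qParam n (τ : ℂ) ^ (m - n * i) *
      (N τ / Periodic.qParam n τ ^ m) -
      Periodic.qParam 1 (τ : ℂ) * (N' τ / Periodic.qParam 1 τ ^ (i + 1))) atImInfty (𝓝 0) := by
    have a1 := ZeroAtFilter.mul_boundedAtFilter t1 hb
    have a2 := ZeroAtFilter.mul_boundedAtFilter t2 hb'
    simpa using Tendsto.sub a1 a2
  refine (tendsto_nhds_unique (t3.congr fun τ ↦ ?_) tendsto_const_nhds).symm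
  have q1 : Periodic.qParam 1 (τ : ℂ) ≠ 0 := Periodic.qParam_ne_zero _
  have qn : Periodic.qParam n (τ : ℂ) ≠ 0 := Periodic.qParam_ne_zero _
  have e : Periodic.qParam n (τ : ℂ) ^ n = Periodic.qParam 1 (τ : ℂ) := by
    rw [Periodic.qParam, Periodic.qParam, ← Complex.exp_nat_mul]
    congr 1
    have : (n : ℂ) ≠ 0 := by exact_mod_cast hn.ne'
    push_cast
    field_simp
  have e2 : Periodic.qParam n (τ : ℂ) ^ m =
      Periodic.qParam n (τ : ℂ) ^ (m - n * i) * Periodic.qParam 1 (τ : ℂ) ^ i := by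
    rw [← e, ← pow_mul, ← pow_add]
    congr 1
    have := Nat.mul_le_mul_left n hi; omega
  have q2 := pow_ne_zero (m - n * i) qn
  rw [e2, hN']
  field_simp
  ring

/-- Sturm bound for a form on a finite index subgroup -/
lemma aux_sturm {k : ℤ} {n : ℕ} (hn : 0 < n) (Γ : Subgroup SL(2, ℤ)) [Γ.FiniteIndex]
    (f : ModularForm (Γ.map (mapGL ℝ)) k) (a : ℕ → ℂ)
    (ha : ∀ τ : ℍ, HasSum (fun j ↦ a j • Periodic.qParam n τ ^ j) (f τ))
    (h0 : ∀ j : ℕ, (j : ℝ) ≤ (n : ℝ) * k * Γ.index / 12 → a j = 0) : (f : ℍ → ℂ) = 0 := by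
  rcases lt_or_ge k 0 with hk | hk
  · rw [ModularForm.isZero_of_neg_weight hk f]; rfl
  lift k to ℕ using hk
  rw [← ModularForm.norm_eq_zero_iff (ℋ := 𝒮ℒ)]
  have hcard : Nat.card (𝒮ℒ ⧸ (Γ.map (mapGL ℝ)).subgroupOf 𝒮ℒ) = Γ.index := by
    change (Γ.map (mapGL ℝ)).relIndex 𝒮ℒ = _
    rw [MonoidHom.range_eq_map, Subgroup.relIndex_map_map_of_injective _ _ mapGL_injective,
      Subgroup.relIndex_top_right]
  apply ModularForm.sturm_bound_levelOne
  have hw : ((k : ℤ) * (Nat.card (𝒮ℒ ⧸ (Γ.map (mapGL ℝ)).subgroupOf 𝒮ℒ) : ℤ)).toNat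
      = k * Γ.index := by
    rw [hcard, ← Nat.cast_mul, Int.toNat_natCast]
  rw [hw]
  set d := k * Γ.index / 12 with hd
  set m := n * (k * Γ.index) / 12 + 1 with hm
  have hfb := aux_div_bounded (h := n) (by exact_mod_cast hn) m ha (fun j hj ↦ h0 j (by
    have : j * 12 ≤ n * (k * Γ.index) := by omega
    rw [le_div_iff₀ (by norm_num)]
    have h' : ((j * 12 : ℕ) : ℝ) ≤ ((n * (k * Γ.index) : ℕ) : ℝ) := by exact_mod_cast this
    push_cast at h' ⊢
    linarith))
  have hnb : IsBoundedAtImInfty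
      (fun τ : ℍ ↦ ModularForm.norm 𝒮ℒ f τ / Periodic.qParam n τ ^ m) := by
    classical
    let := Fintype.ofFinite (𝒮ℒ ⧸ (Γ.map (mapGL ℝ)).subgroupOf 𝒮ℒ)
    let q₀ : 𝒮ℒ ⧸ (Γ.map (mapGL ℝ)).subgroupOf 𝒮ℒ := ⟦1⟧
    have hp : IsBoundedAtImInfty (fun τ : ℍ ↦ ∏ q ∈ Finset.univ.erase q₀,
        SlashInvariantForm.quotientFunc f q τ) := by
      rw [IsBoundedAtImInfty, BoundedAtFilter,
        show (1 : ℍ → ℝ) = (fun x ↦ ∏ i ∈ Finset.univ.erase q₀, 1) by ext; simp]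
      refine .finsetProd (Quotient.forall.mpr fun ⟨r, hr⟩ _ ↦ ?_)
      obtain ⟨γ, rfl⟩ := hr
      have hc := f.bdd_at_cusps' (c := (mapGL ℝ γ)⁻¹ • OnePoint.infty) (by
        rw [Subgroup.IsArithmetic.isCusp_iff_isCusp_SL2Z, isCusp_SL2Z_iff']
        exact ⟨γ⁻¹, by simp⟩)
      exact hc _ rfl
    have := Asymptotics.IsBigO.mul hfb hp
    simp only [Pi.one_apply, mul_one] at this
    refine this.congr_left fun τ ↦ ?_
    rw [ModularForm.coe_norm, Finset.prod_apply, ← Finset.mul_prod_erase _ _ (Finset.mem_univ q₀)]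
    have : SlashInvariantForm.quotientFunc f q₀ = f := by
      simp [q₀]
    rw [this]
    ring
  have hz := aux_coeff_zero hn (m := m) (d := d)
    (fun τ ↦ ModularForm.hasSum_qExpansion (ModularForm.norm 𝒮ℒ f) one_pos
      one_mem_strictPeriods_SL τ) hnb (by
      rw [hm, hd, Nat.lt_succ_iff, Nat.le_div_iff_mul_le (by norm_num), mul_assoc]
      exact Nat.mul_le_mul_left _ (Nat.div_mul_le_self _ _))
  refine lt_of_lt_of_le (b := ((d + 1 : ℕ) : ℕ∞)) (by exact_mod_cast Nat.lt_succ_self d) ?_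
  exact PowerSeries.nat_le_order _ _ fun i hi ↦ hz i (by omega)

lemma aux_slash (k : ℤ) (f : ℂ → ℂ) (g : SL(2, ℤ)) (τ : ℍ) :
    ((fun z : ℍ ↦ f z) ∣[k] g) τ = f ((g • τ : ℍ) : ℂ) * denom g τ ^ (-k) :=
  ModularForm.SL_slash_apply _ g τ

end helpers

/-- valence inequality for subgroups: let `Γ ≤ SL₂(ℤ)` have finite index
`I` and contain `Γ(n)`, and let `f` be a modular form of weight `k` for `Γ` (holomorphic
on `ℍ`, weight-`k` invariant under `Γ`, and with `f|_k g` bounded on `{Im τ ≥ 1}` for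
every `g ∈ SL₂(ℤ)`).  Then `f(τ+n) = f(τ)`; and for any Fourier expansion
`f(τ) = Σ_{j≥0} a_j e(jτ/n)`, if `a_j = 0` for all `0 ≤ j ≤ nkI/12` then `f ≡ 0`. -/
theorem stmt_8 (k : ℤ) (n : ℕ) (hn : 0 < n)
    (Γ : Subgroup (Matrix.SpecialLinearGroup (Fin 2) ℤ))
    (ind : ℕ) (hind : Γ.index = ind) (hindpos : 0 < ind)
    (hΓ : CongruenceSubgroup.Gamma n ≤ Γ)
    (f : ℂ → ℂ)
    (hol : DifferentiableOn ℂ f {τ : ℂ | 0 < τ.im})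
    (transf : ∀ γ ∈ Γ, ∀ τ : ℂ, 0 < τ.im →
      f ((((γ : Matrix (Fin 2) (Fin 2) ℤ) 0 0 : ℂ) * τ + ((γ : Matrix (Fin 2) (Fin 2) ℤ) 0 1 : ℂ)) /
          (((γ : Matrix (Fin 2) (Fin 2) ℤ) 1 0 : ℂ) * τ + ((γ : Matrix (Fin 2) (Fin 2) ℤ) 1 1 : ℂ))) =
        (((γ : Matrix (Fin 2) (Fin 2) ℤ) 1 0 : ℂ) * τ + ((γ : Matrix (Fin 2) (Fin 2) ℤ) 1 1 : ℂ)) ^ k * f τ)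
    (bdd : ∀ g : Matrix.SpecialLinearGroup (Fin 2) ℤ, ∃ C : ℝ, ∀ τ : ℂ, 1 ≤ τ.im →
      ‖(((g : Matrix (Fin 2) (Fin 2) ℤ) 1 0 : ℂ) * τ + ((g : Matrix (Fin 2) (Fin 2) ℤ) 1 1 : ℂ)) ^ (-k) *
        f ((((g : Matrix (Fin 2) (Fin 2) ℤ) 0 0 : ℂ) * τ + ((g : Matrix (Fin 2) (Fin 2) ℤ) 0 1 : ℂ)) /
           (((g : Matrix (Fin 2) (Fin 2) ℤ) 1 0 : ℂ) * τ + ((g : Matrix (Fin 2) (Fin 2) ℤ) 1 1 : ℂ)))‖ ≤ C) :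
    (∀ τ : ℂ, 0 < τ.im → f (τ + n) = f τ) ∧
    (∀ a : ℕ → ℂ,
      (∀ τ : ℂ, 0 < τ.im →
        HasSum (fun j : ℕ => a j * Complex.exp (2 * Real.pi * Complex.I * j * τ / n)) (f τ)) →
      (∀ j : ℕ, (j : ℝ) ≤ (n : ℝ) * (k : ℝ) * (ind : ℝ) / 12 → a j = 0) →
      ∀ τ : ℂ, 0 < τ.im → f τ = 0) := by
  have hcoe : ∀ (g : Matrix.SpecialLinearGroup (Fin 2) ℤ) (τ : UpperHalfPlane),
      ((g • τ : UpperHalfPlane) : ℂ) = (((g : Matrix (Fin 2) (Fin 2) ℤ) 0 0 : ℂ) * τ +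
        ((g : Matrix (Fin 2) (Fin 2) ℤ) 0 1 : ℂ)) /
          (((g : Matrix (Fin 2) (Fin 2) ℤ) 1 0 : ℂ) * τ +
          ((g : Matrix (Fin 2) (Fin 2) ℤ) 1 1 : ℂ)) := by
    intro g τ
    rw [UpperHalfPlane.coe_specialLinearGroup_apply]
    simp
  have hden : ∀ (g : Matrix.SpecialLinearGroup (Fin 2) ℤ) (τ : UpperHalfPlane),
      UpperHalfPlane.denom g τ = ((g : Matrix (Fin 2) (Fin 2) ℤ) 1 0 : ℂ) * τ +
          ((g : Matrix (Fin 2) (Fin 2) ℤ) 1 1 : ℂ) := fun g τ ↦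
    ModularGroup.denom_apply g τ
  refine ⟨fun τ hτ ↦ ?_, fun a ha h0 τ hτ ↦ ?_⟩
  · have hT : ModularGroup.T ^ (n : ℤ) ∈ Γ :=
      hΓ (CongruenceSubgroup.ModularGroup_T_pow_mem_Gamma n n dvd_rfl)
    have := transf _ hT τ hτ
    rw [ModularGroup.coe_T_zpow] at this
    simpa using this
  · subst hind
    have : Γ.FiniteIndex := ⟨hindpos.ne'⟩
    let F : ModularForm (Γ.map (Matrix.SpecialLinearGroup.mapGL ℝ)) k :=
      { toFun := fun z ↦ f z
        slash_action_eq' := by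
          rintro _ ⟨γ, hγ, rfl⟩
          ext τ
          refine (aux_slash k f γ τ).trans ?_
          simp only [hcoe, hden, transf γ hγ τ τ.im_pos]
          have := UpperHalfPlane.denom_ne_zero γ τ
          rw [hden] at this
          rw [mul_comm, ← mul_assoc, ← zpow_add₀ this]
          simp
        holo' := by
          refine UpperHalfPlane.mdifferentiable_iff.mpr (hol.congr fun z hz ↦ ?_)
          simp [UpperHalfPlane.ofComplex_apply_of_im_pos hz]
        bdd_at_cusps' := by
          intro c hc
          rw [Subgroup.IsArithmetic.isCusp_iff_isCusp_SL2Z] at hc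
          rw [OnePoint.isBoundedAt_iff_forall_SL2Z hc]
          intro γ _
          rw [UpperHalfPlane.isBoundedAtImInfty_iff]
          obtain ⟨C, hC⟩ := bdd γ
          refine ⟨C, 1, fun z hz ↦ ?_⟩
          rw [aux_slash k f γ z]
          simp only [hcoe, hden]
          rw [mul_comm]
          exact hC z hz }
    have hF := aux_sturm hn Γ F a (fun τ ↦ by
      have := ha τ τ.im_pos
      refine this.congr_fun fun j ↦ ?_
      rw [smul_eq_mul, Function.Periodic.qParam, ← Complex.exp_nat_mul]
      congr 2
      push_cast
      ring) h0
    exact congrFun hF ⟨τ, hτ⟩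
end

section
/- Let r and m be positive integers and let Γ(r,m) = { [[a,b],[c,d]] ∈ SL₂(ℤ) : a ≡ 1, d ≡ 1, c ≡ 0 (mod r) and cm ≡ 0 (mod r²) }. For every γ = [[a,b],[c,d]] ∈ SL₂(ℤ) with a ≡ d ≡ 1 and b ≡ c ≡ 0 (mod r), the conjugate [[1,0],[0,r]]·γ·[[1,0],[0,r]]⁻¹ = [[a, b/r],[cr, d]] is an integer matrix lying in Γ(r,m). Consequently [SL₂(ℤ) : Γ(r,m)] ≤ r³·Π_{p | r, p prime}(1 − 1/p²). -/
/-- The group `Γ(r,m) = { [[a,b],[c,d]] ∈ SL₂(ℤ) : a ≡ 1, d ≡ 1, c ≡ 0 (mod r),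
cm ≡ 0 (mod r²) }`. -/
def GammaRM (r m : ℤ) : Subgroup (Matrix.SpecialLinearGroup (Fin 2) ℤ) where
  carrier := {γ | γ 0 0 ≡ 1 [ZMOD r] ∧ γ 1 1 ≡ 1 [ZMOD r] ∧
    γ 1 0 ≡ 0 [ZMOD r] ∧ γ 1 0 * m ≡ 0 [ZMOD r ^ 2]}
  one_mem' := by
    refine ⟨?_, ?_, ?_, ?_⟩ <;> simp
  mul_mem' := by
    rintro A B ⟨hA1, hA2, hA3, hA4⟩ ⟨hB1, hB2, hB3, hB4⟩
    have hAB : ∀ i j : Fin 2, (A * B) i j = A i 0 * B 0 j + A i 1 * B 1 j := by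
      intro i j
      simp [Matrix.SpecialLinearGroup.coe_mul, Matrix.mul_apply, Fin.sum_univ_two]
    refine ⟨?_, ?_, ?_, ?_⟩
    · rw [hAB]
      calc A 0 0 * B 0 0 + A 0 1 * B 1 0
          ≡ 1 * 1 + A 0 1 * 0 [ZMOD r] := (hA1.mul hB1).add (Int.ModEq.mul_left _ hB3)
        _ = 1 := by ring
    · rw [hAB]
      calc A 1 0 * B 0 1 + A 1 1 * B 1 1
          ≡ 0 * B 0 1 + 1 * 1 [ZMOD r] := (Int.ModEq.mul_right _ hA3).add (hA2.mul hB2)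
        _ = 1 := by ring
    · rw [hAB]
      calc A 1 0 * B 0 0 + A 1 1 * B 1 0
          ≡ 0 * B 0 0 + A 1 1 * 0 [ZMOD r] :=
            (Int.ModEq.mul_right _ hA3).add (Int.ModEq.mul_left _ hB3)
        _ = 0 := by ring
    · rw [hAB]
      have h4 : (A 1 0 * B 0 0 + A 1 1 * B 1 0) * m
          = (A 1 0 * m) * B 0 0 + A 1 1 * (B 1 0 * m) := by ring
      rw [h4]
      have hA4' : r ^ 2 ∣ A 1 0 * m := (Int.modEq_zero_iff_dvd).mp hA4
      have hB4' : r ^ 2 ∣ B 1 0 * m := (Int.modEq_zero_iff_dvd).mp hB4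
      exact (Int.modEq_zero_iff_dvd).mpr
        (dvd_add (hA4'.mul_right _) (hB4'.mul_left _))
  inv_mem' := by
    rintro A ⟨hA1, hA2, hA3, hA4⟩
    have hinv : ∀ i j : Fin 2,
        A⁻¹ i j = (!![A 1 1, -A 0 1; -A 1 0, A 0 0] : Matrix (Fin 2) (Fin 2) ℤ) i j := by
      intro i j
      rw [Matrix.SpecialLinearGroup.SL2_inv_expl A]
      simp [Matrix.etaExpand_eq]
    refine ⟨?_, ?_, ?_, ?_⟩
    · rw [hinv]; simpa using hA2
    · rw [hinv]; simpa using hA1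
    · rw [hinv]
      simpa using hA3.neg
    · rw [hinv]
      have he : (!![A 1 1, -A 0 1; -A 1 0, A 0 0] : Matrix (Fin 2) (Fin 2) ℤ) 1 0 = -A 1 0 := by
        simp
      rw [he]
      calc (-(A 1 0)) * m = -(A 1 0 * m) := by ring
        _ ≡ -0 [ZMOD r ^ 2] := hA4.neg
        _ = 0 := by ring

open Finset in
lemma count_aux (T : Finset ℕ) : ∀ N : ℕ, (∀ p ∈ T, p.Prime) → (∏ p ∈ T, p) ∣ N →
    ((((range N ×ˢ range N).filter (fun z => ∀ p ∈ T, ¬ (p ∣ z.1 ∧ p ∣ z.2))).card : ℕ) : ℝ)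
      = (N : ℝ) ^ 2 * ∏ p ∈ T, (1 - 1 / (p : ℝ) ^ 2) := by
  induction T using Finset.induction_on with
  | empty => intro N _ _; simp [sq]
  | insert q T hq ih =>
    intro N hp hd
    rw [Finset.prod_insert hq] at hd
    have hqp : q.Prime := hp q (mem_insert_self _ _)
    have hpT : ∀ p ∈ T, p.Prime := fun p h => hp p (mem_insert_of_mem h)
    obtain ⟨M, rfl⟩ : q ∣ N := (dvd_mul_right _ _).trans hd
    have hdM : (∏ p ∈ T, p) ∣ M := Nat.dvd_of_mul_dvd_mul_left hqp.pos hd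
    have h1 := ih (q * M) hpT (hdM.mul_left _)
    have h2 := ih M hpT hdM
    set S := (range (q*M) ×ˢ range (q*M)).filter (fun z => ∀ p ∈ T, ¬ (p ∣ z.1 ∧ p ∣ z.2)) with hS
    have h3 := S.card_filter_add_card_filter_not (fun z => q ∣ z.1 ∧ q ∣ z.2)
    have h4 : (S.filter (fun z => ¬ (q ∣ z.1 ∧ q ∣ z.2))) =
        ((range (q*M) ×ˢ range (q*M)).filter
          (fun z => ∀ p ∈ insert q T, ¬ (p ∣ z.1 ∧ p ∣ z.2))) := by
      ext z
      simp only [hS, mem_filter, forall_mem_insert]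
      tauto
    have h5 : (S.filter (fun z => q ∣ z.1 ∧ q ∣ z.2)) =
        ((range M ×ˢ range M).filter (fun z => ∀ p ∈ T, ¬ (p ∣ z.1 ∧ p ∣ z.2))).image
          (fun z => (q * z.1, q * z.2)) := by
      have hc : ∀ p ∈ T, ∀ x, p ∣ q * x ↔ p ∣ x := by
        intro p hpm x
        refine (Nat.Coprime.dvd_mul_left ?_)
        rw [Nat.coprime_primes (hpT p hpm) hqp]
        rintro rfl; exact hq hpm
      ext ⟨x, y⟩
      simp only [hS, mem_filter, mem_image, mem_product, mem_range, Prod.exists, Prod.mk.injEq]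
      constructor
      · rintro ⟨⟨⟨hx, hy⟩, h⟩, ⟨x', rfl⟩, ⟨y', rfl⟩⟩
        refine ⟨x', y', ⟨⟨Nat.lt_of_mul_lt_mul_left hx, Nat.lt_of_mul_lt_mul_left hy⟩, ?_⟩, rfl, rfl⟩
        intro p hpm
        have := h p hpm
        rwa [hc p hpm, hc p hpm] at this
      · rintro ⟨x', y', ⟨⟨hx, hy⟩, h⟩, rfl, rfl⟩
        refine ⟨⟨⟨Nat.mul_lt_mul_of_pos_left hx hqp.pos, Nat.mul_lt_mul_of_pos_left hy hqp.pos⟩, ?_⟩,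
          dvd_mul_right _ _, dvd_mul_right _ _⟩
        intro p hpm
        rw [hc p hpm, hc p hpm]
        exact h p hpm
    rw [h4, h5, card_image_of_injective] at h3
    · rw [← h3] at h1
      push_cast at h1
      rw [h2] at h1
      rw [prod_insert hq]
      have hq0 : (q : ℝ) ≠ 0 := by exact_mod_cast hqp.ne_zero
      have : (((q * M : ℕ) : ℝ)) ^ 2 * ((1 - 1 / (q : ℝ) ^ 2) * ∏ p ∈ T, (1 - 1 / (p : ℝ) ^ 2))
        = ((q : ℝ) * M) ^ 2 * ∏ p ∈ T, (1 - 1 / (p : ℝ) ^ 2)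
          - (M : ℝ) ^ 2 * ∏ p ∈ T, (1 - 1 / (p : ℝ) ^ 2) := by
        push_cast; field_simp
      rw [this]; linarith
    · rintro ⟨a, b⟩ ⟨c, d⟩ h
      simpa [hqp.ne_zero] using h

/-- arithmetic core -/
lemma mem_aux (r m : ℤ) (g h : Matrix.SpecialLinearGroup (Fin 2) ℤ) (k l : ℤ)
    (h0 : (1 + r * k) * g 0 0 ≡ (1 + r * l) * h 0 0 [ZMOD r ^ 2])
    (h1 : (1 + r * k) * g 1 0 ≡ (1 + r * l) * h 1 0 [ZMOD r ^ 2]) :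
    g⁻¹ * h ∈ GammaRM r m := by
  have dg : g 0 0 * g 1 1 - g 0 1 * g 1 0 = 1 := by
    have := g.det_coe; rwa [Matrix.det_fin_two] at this
  have dh : h 0 0 * h 1 1 - h 0 1 * h 1 0 = 1 := by
    have := h.det_coe; rwa [Matrix.det_fin_two] at this
  have hAB : ∀ i j : Fin 2, (g⁻¹ * h) i j = g⁻¹ i 0 * h 0 j + g⁻¹ i 1 * h 1 j := by
    intro i j
    simp [Matrix.SpecialLinearGroup.coe_mul, Matrix.mul_apply, Fin.sum_univ_two]
  have hinv : ∀ i j : Fin 2,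
      g⁻¹ i j = (!![g 1 1, -g 0 1; -g 1 0, g 0 0] : Matrix (Fin 2) (Fin 2) ℤ) i j := by
    intro i j
    rw [Matrix.SpecialLinearGroup.SL2_inv_expl g]
    simp
  have e00 : (g⁻¹ * h) 0 0 = g 1 1 * h 0 0 - g 0 1 * h 1 0 := by
    rw [hAB, hinv, hinv]; simp; ring
  have e11 : (g⁻¹ * h) 1 1 = g 0 0 * h 1 1 - g 1 0 * h 0 1 := by
    rw [hAB, hinv, hinv]; simp; ring
  have e10 : (g⁻¹ * h) 1 0 = g 0 0 * h 1 0 - g 1 0 * h 0 0 := by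
    rw [hAB, hinv, hinv]; simp; ring
  obtain ⟨s, hs⟩ := h0.dvd
  obtain ⟨t, ht⟩ := h1.dvd
  generalize g 0 0 = a at *
  generalize g 0 1 = b at *
  generalize g 1 0 = c at *
  generalize g 1 1 = d at *
  generalize h 0 0 = a' at *
  generalize h 0 1 = b' at *
  generalize h 1 0 = c' at *
  generalize h 1 1 = d' at *
  have key : r ^ 2 ∣ a * c' - c * a' := by
    -- (1+rl)(ac'-ca') = r^2 (a t - c s)
    refine ⟨(1 - r * l) * (a * t - c * s) + l ^ 2 * (a * c' - c * a'), ?_⟩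
    linear_combination (1 - r * l) * (a * ht - c * hs)
  refine ⟨?_, ?_, ?_, ?_⟩
  · rw [e00]
    apply Int.ModEq.symm
    rw [Int.modEq_iff_dvd]
    refine ⟨k - l * (d * a' - b * c') + r * (d * s - b * t), ?_⟩
    linear_combination d * hs - b * ht + (1 + r * k) * dg
  · rw [e11]
    apply Int.ModEq.symm
    rw [Int.modEq_iff_dvd]
    refine ⟨l - k * (a * d' - c * b') - r * (s * d' - t * b'), ?_⟩
    linear_combination -d' * hs + b' * ht + (1 + r * l) * dh
  · rw [e10, Int.modEq_zero_iff_dvd]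
    exact (dvd_pow_self r two_ne_zero).trans key
  · rw [e10, Int.modEq_zero_iff_dvd]
    exact key.mul_right _

lemma inj_aux (r : ℤ) (hr : 0 < r) (g : Matrix.SpecialLinearGroup (Fin 2) ℤ) (k l : ℤ)
    (h0 : (1 + r * k) * g 0 0 ≡ (1 + r * l) * g 0 0 [ZMOD r ^ 2])
    (h1 : (1 + r * k) * g 1 0 ≡ (1 + r * l) * g 1 0 [ZMOD r ^ 2]) : k ≡ l [ZMOD r] := by
  have dg : g 0 0 * g 1 1 - g 0 1 * g 1 0 = 1 := by
    have := g.det_coe; rwa [Matrix.det_fin_two] at this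
  obtain ⟨s, hs⟩ := h0.dvd
  obtain ⟨t, ht⟩ := h1.dvd
  rw [Int.modEq_iff_dvd]
  refine ⟨g 1 1 * s - g 0 1 * t, ?_⟩
  apply mul_left_cancel₀ hr.ne'
  linear_combination g 1 1 * hs - g 0 1 * ht - r * (l - k) * dg

open Finset in
lemma index_aux (n : ℕ) (m : ℤ) (hn : 0 < n) :
    (GammaRM n m).index * n ≤ ((range (n ^ 2) ×ˢ range (n ^ 2)).filter
      (fun z => ∀ p ∈ n.primeFactors, ¬ (p ∣ z.1 ∧ p ∣ z.2))).card := by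
  set S := ((range (n ^ 2) ×ˢ range (n ^ 2)).filter
      (fun z => ∀ p ∈ n.primeFactors, ¬ (p ∣ z.1 ∧ p ∣ z.2))) with hS
  have hn2 : (0 : ℤ) < (n : ℤ) ^ 2 := by positivity
  let φ : ℤ → ℕ := fun x => (x % (n : ℤ) ^ 2).toNat
  have hφ : ∀ x, ((φ x : ℕ) : ℤ) = x % (n : ℤ) ^ 2 := fun x =>
    Int.toNat_of_nonneg (Int.emod_nonneg _ hn2.ne')
  have hφlt : ∀ x, φ x < n ^ 2 := fun x => by
    have := Int.emod_lt_of_pos x hn2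
    rw [← hφ] at this
    exact_mod_cast this
  have hφe : ∀ x y, φ x = φ y → x ≡ y [ZMOD (n : ℤ) ^ 2] := fun x y h => by
    have h' : ((φ x : ℕ) : ℤ) = φ y := by rw [h]
    rwa [hφ, hφ] at h'
  have hφd : ∀ (p : ℕ), p ∣ n → ∀ x, p ∣ φ x → (p : ℤ) ∣ x := fun p hp x h => by
    have h1 : (p : ℤ) ∣ (φ x : ℤ) := by exact_mod_cast h
    rw [hφ] at h1
    have h2 : (p : ℤ) ∣ (n : ℤ) ^ 2 := dvd_pow (by exact_mod_cast hp) two_ne_zero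
    rw [← Int.emod_add_mul_ediv x ((n : ℤ) ^ 2)]
    exact dvd_add h1 (h2.mul_right _)
  let f : (Matrix.SpecialLinearGroup (Fin 2) ℤ ⧸ GammaRM n m) × Fin n → S := fun x =>
    ⟨(φ ((1 + n * (x.2 : ℕ)) * x.1.out 0 0), φ ((1 + n * (x.2 : ℕ)) * x.1.out 1 0)), by
      simp only [hS, mem_filter, mem_product, mem_range]
      refine ⟨⟨hφlt _, hφlt _⟩, ?_⟩
      rintro p hp ⟨h0, h1⟩
      have hpp := Nat.prime_of_mem_primeFactors hp
      have hpn := Nat.dvd_of_mem_primeFactors hp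
      have h0 := hφd p hpn _ h0
      have h1 := hφd p hpn _ h1
      have dg := x.1.out.det_coe
      rw [Matrix.det_fin_two] at dg
      have hpn' : (p : ℤ) ∣ n := by exact_mod_cast hpn
      have : (p : ℤ) ∣ 1 := by
        have h2 := dvd_sub (dvd_sub (h0.mul_right (x.1.out 1 1)) (h1.mul_right (x.1.out 0 1)))
          (hpn'.mul_right ((x.2 : ℕ) : ℤ))
        refine h2.trans (dvd_of_eq ?_)
        linear_combination (1 + (n : ℤ) * ((x.2 : ℕ) : ℤ)) * dg
      exact (Nat.prime_iff_prime_int.1 hpp).not_isUnit (isUnit_of_dvd_one this)⟩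
  have hf : Function.Injective f := by
    rintro ⟨x, k⟩ ⟨y, l⟩ h
    have h' := congrArg Subtype.val h
    simp only [f, Prod.mk.injEq] at h'
    have h0 := hφe _ _ h'.1
    have h1 := hφe _ _ h'.2
    have hxy : x = y := by
      rw [← x.out_eq', ← y.out_eq']
      exact QuotientGroup.eq.2 (mem_aux n m _ _ _ _ h0 h1)
    subst hxy
    have := inj_aux n (by exact_mod_cast hn) _ _ _ h0 h1
    rw [Int.natCast_modEq_iff] at this
    have := this.eq_of_lt_of_lt k.2 l.2
    rw [Fin.ext this]
  have := Nat.card_le_card_of_injective f hf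
  simpa [Nat.card_prod, Subgroup.index] using this

/-- for positive integers `r, m`, every `γ ∈ SL₂(ℤ)` with
`a ≡ d ≡ 1` and `b ≡ c ≡ 0 (mod r)` has its conjugate
`[[1,0],[0,r]]·γ·[[1,0],[0,r]]⁻¹ = [[a, b/r],[cr, d]]` an integer matrix lying in
`Γ(r,m)`; consequently `[SL₂(ℤ) : Γ(r,m)] ≤ r³·Π_{p ∣ r prime}(1 − 1/p²)`. -/
theorem stmt_16 (r m : ℤ) (hr : 0 < r) (hm : 0 < m) :
    (∀ γ : Matrix.SpecialLinearGroup (Fin 2) ℤ,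
      γ 0 0 ≡ 1 [ZMOD r] → γ 1 1 ≡ 1 [ZMOD r] →
      γ 0 1 ≡ 0 [ZMOD r] → γ 1 0 ≡ 0 [ZMOD r] →
      ∃ γ' : Matrix.SpecialLinearGroup (Fin 2) ℤ, γ' ∈ GammaRM r m ∧
        γ' 0 0 = γ 0 0 ∧ γ' 0 1 = γ 0 1 / r ∧ γ' 1 0 = γ 1 0 * r ∧ γ' 1 1 = γ 1 1) ∧
    ((GammaRM r m).index : ℝ) ≤
      (r : ℝ) ^ 3 * ∏ p ∈ r.natAbs.primeFactors, (1 - 1 / (p : ℝ) ^ 2) := by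
  constructor
  · intro γ ha hd hb hc
    have dg : γ 0 0 * γ 1 1 - γ 0 1 * γ 1 0 = 1 := by
      have := γ.det_coe; rwa [Matrix.det_fin_two] at this
    have hb' : γ 0 1 / r * r = γ 0 1 := Int.ediv_mul_cancel (Int.modEq_zero_iff_dvd.1 hb)
    have hc' := Int.modEq_zero_iff_dvd.1 hc
    refine ⟨⟨!![γ 0 0, γ 0 1 / r; γ 1 0 * r, γ 1 1], ?_⟩, ⟨?_, ?_, ?_, ?_⟩, ?_, ?_, ?_, ?_⟩
    · rw [Matrix.det_fin_two_of]
      linear_combination dg - γ 1 0 * hb'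
    · simpa using ha
    · simpa using hd
    · simp [Int.modEq_zero_iff_dvd]
    · simp only [Int.modEq_zero_iff_dvd]
      have : r ^ 2 ∣ γ 1 0 * r := by
        rw [sq]; exact mul_dvd_mul_right hc' r
      simpa using this.mul_right m
    all_goals simp
  · obtain ⟨n, rfl⟩ := Int.eq_ofNat_of_zero_le hr.le
    have hn : 0 < n := by exact_mod_cast hr
    have h1 := index_aux n m hn
    have h2 := count_aux n.primeFactors (n ^ 2) (fun p => Nat.prime_of_mem_primeFactors)
      ((Nat.prod_primeFactors_dvd n).trans (dvd_pow_self n two_ne_zero))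
    have h3 := (Nat.cast_le (α := ℝ)).2 h1
    rw [h2, Nat.cast_mul] at h3
    have hn' : (0 : ℝ) < n := by exact_mod_cast hn
    simp only [Int.natAbs_natCast, Int.cast_natCast]
    refine le_of_mul_le_mul_right (h3.trans_eq ?_) hn'
    push_cast
    ring
end
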